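/- arXiv:2407.17964 — 5 statements merged into one kernel-verified Lean document; each statement's English description precedes it below -/
import Mathlib

section
/- Let T > 0, κ > 0, and let y : ℝ × ℝ^d → ℝ be twice continuously differentiable such that there is a compact set K ⊂ ℝ^d with y(t,x) = 0 whenever x ∉ K, and y(0,x) = 0 for all x ∈ ℝ^d. Then (1/2) ∫₀^T ∫_{ℝ^d} (∂ₜy − κΔy)² dx dt ≤ ∫₀^T ∫_{ℝ^d} ((∂ₜy)² + κ²(Δy)²) dx dt ≤ ∫₀^T ∫_{ℝ^d} (∂ₜy − κΔy)² dx dt. -/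
open MeasureTheory

/-- Partial derivative with respect to the first (time) variable. -/
noncomputable def timeDeriv {d : ℕ} (y : ℝ × (Fin d → ℝ) → ℝ) (t : ℝ) (x : Fin d → ℝ) : ℝ :=
  deriv (fun s => y (s, x)) t

/-- Partial derivative with respect to the `i`-th spatial variable. -/
noncomputable def spatialPartial {d : ℕ} (i : Fin d) (y : ℝ × (Fin d → ℝ) → ℝ)
    (t : ℝ) (x : Fin d → ℝ) : ℝ :=
  deriv (fun s => y (t, Function.update x i s)) (x i)

/-- The spatial Laplacian `Δy(t,·) = Σ_i ∂²y/∂x_i²`. -/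
noncomputable def spatialLaplacian {d : ℕ} (y : ℝ × (Fin d → ℝ) → ℝ)
    (t : ℝ) (x : Fin d → ℝ) : ℝ :=
  ∑ i : Fin d, spatialPartial i (fun p => spatialPartial i y p.1 p.2) t x

section helpers
variable {d : ℕ}

lemma aux_time {y : ℝ × (Fin d → ℝ) → ℝ} (hy : Differentiable ℝ y) (t : ℝ) (x : Fin d → ℝ) :
    HasDerivAt (fun s => y (s, x)) (fderiv ℝ y (t, x) (1, 0)) t := by
  have h1 : HasDerivAt (fun s : ℝ => (s, x)) ((1 : ℝ), (0 : Fin d → ℝ)) t :=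
    (hasDerivAt_id t).prodMk (hasDerivAt_const t x)
  exact (hy (t, x)).hasFDerivAt.comp_hasDerivAt t h1

lemma aux_space {y : ℝ × (Fin d → ℝ) → ℝ} (hy : Differentiable ℝ y) (i : Fin d)
    (t : ℝ) (x : Fin d → ℝ) :
    spatialPartial i y t x = fderiv ℝ y (t, x) (0, Pi.single i 1) := by
  have h1 : HasDerivAt (fun s : ℝ => (t, Function.update x i s))
      ((0 : ℝ), (Pi.single i 1 : Fin d → ℝ)) (x i) :=
    (hasDerivAt_const (x i) t).prodMk (hasDerivAt_update x i (x i))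
  have h2 : HasFDerivAt y (fderiv ℝ y (t, x)) (t, Function.update x i (x i)) := by
    rw [Function.update_eq_self]; exact (hy (t, x)).hasFDerivAt
  exact (h2.comp_hasDerivAt (x i) h1).deriv

lemma aux_slice {y : ℝ × (Fin d → ℝ) → ℝ} (hy : Differentiable ℝ y)
    (t : ℝ) (x v : Fin d → ℝ) :
    fderiv ℝ (fun x => y (t, x)) x v = fderiv ℝ y (t, x) (0, v) := by
  have h1 := (hy (t, x)).hasFDerivAt.comp x (hasFDerivAt_prodMk_right (𝕜 := ℝ) t x)
  have h2 : fderiv ℝ (fun x => y (t, x)) x = _ := h1.fderiv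
  rw [h2]; simp

lemma aux_supp {y : ℝ × (Fin d → ℝ) → ℝ} {K : Set (Fin d → ℝ)} (hK : IsCompact K)
    (hs : ∀ t x, x ∉ K → y (t, x) = 0) (v : ℝ × (Fin d → ℝ)) (t : ℝ) (x : Fin d → ℝ)
    (hx : x ∉ K) : fderiv ℝ y (t, x) v = 0 := by
  have h : y =ᶠ[nhds (t, x)] fun _ => 0 := by
    have ho : IsOpen {p : ℝ × (Fin d → ℝ) | p.2 ∈ Kᶜ} :=
      hK.isClosed.isOpen_compl.preimage continuous_snd
    filter_upwards [ho.mem_nhds hx] with p hp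
    exact hs p.1 p.2 hp
  rw [h.fderiv_eq]; simp

lemma aux_int_slice {f : ℝ × (Fin d → ℝ) → ℝ} (hf : Continuous f) {K : Set (Fin d → ℝ)}
    (hK : IsCompact K) (hs : ∀ t x, x ∉ K → f (t, x) = 0) (t : ℝ) :
    Integrable (fun x => f (t, x)) := by
  apply Continuous.integrable_of_hasCompactSupport (by fun_prop)
  exact HasCompactSupport.intro hK (fun x hx => hs t x hx)

lemma aux_int {f : ℝ × (Fin d → ℝ) → ℝ} (hf : Continuous f) {K : Set (Fin d → ℝ)}
    (hK : IsCompact K) (hs : ∀ t x, x ∉ K → f (t, x) = 0) (T : ℝ) :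
    Integrable f ((volume.restrict (Set.Ioc (0:ℝ) T)).prod (volume : Measure (Fin d → ℝ))) := by
  have h1 : IntegrableOn f (Set.Icc (0:ℝ) T ×ˢ K) (volume.prod volume) :=
    hf.continuousOn.integrableOn_compact (isCompact_Icc.prod hK)
  have h2 : IntegrableOn f (Set.Icc (0:ℝ) T ×ˢ Set.univ) (volume.prod volume) := by
    refine h1.of_forall_sdiff_eq_zero (measurableSet_Icc.prod MeasurableSet.univ) ?_
    rintro ⟨t, x⟩ ⟨⟨ht, -⟩, hx⟩
    exact hs t x (fun h => hx ⟨ht, h⟩)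
  have h3 := h2.mono_set (Set.prod_mono_left (t := Set.univ) (Set.Ioc_subset_Icc_self (a := (0:ℝ)) (b := T)))
  rw [IntegrableOn, ← Measure.prod_restrict, Measure.restrict_univ] at h3
  exact h3

lemma aux_C1 {y : ℝ × (Fin d → ℝ) → ℝ} (hy : ContDiff ℝ 2 y) (v : ℝ × (Fin d → ℝ)) :
    ContDiff ℝ 1 (fun p => fderiv ℝ y p v) :=
  (hy.fderiv_right (m := 1) (by norm_num)).clm_apply contDiff_const

lemma aux_C0 {y : ℝ × (Fin d → ℝ) → ℝ} (hy : ContDiff ℝ 1 y) (v : ℝ × (Fin d → ℝ)) :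
    Continuous (fun p => fderiv ℝ y p v) :=
  (hy.continuous_fderiv (by norm_num)).clm_apply continuous_const

lemma aux_symm {y : ℝ × (Fin d → ℝ) → ℝ} (hy : ContDiff ℝ 2 y) (v w p : ℝ × (Fin d → ℝ)) :
    fderiv ℝ (fun q => fderiv ℝ y q v) p w = fderiv ℝ (fun q => fderiv ℝ y q w) p v := by
  have hd : DifferentiableAt ℝ (fderiv ℝ y) p :=
    ((hy.fderiv_right (m := 1) (by norm_num)).differentiable (by norm_num)) p
  have key : ∀ v w, fderiv ℝ (fun q => fderiv ℝ y q v) p w = fderiv ℝ (fderiv ℝ y) p w v := by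
    intro v w
    rw [fderiv_clm_apply hd (differentiableAt_const v)]
    simp
  rw [key, key]
  exact (hy.contDiffAt.isSymmSndFDerivAt (by simp)) w v

lemma aux_cross {T : ℝ} (hT : 0 < T) {y : ℝ × (Fin d → ℝ) → ℝ} (hy : ContDiff ℝ 2 y)
    {K : Set (Fin d → ℝ)} (hK : IsCompact K) (hs : ∀ t x, x ∉ K → y (t, x) = 0)
    (hinit : ∀ x, y (0, x) = 0) (e : Fin d → ℝ) :
    ∫ p, fderiv ℝ y p (1, 0) * fderiv ℝ (fun q => fderiv ℝ y q (0, e)) p (0, e)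
      ∂((volume.restrict (Set.Ioc (0:ℝ) T)).prod (volume : Measure (Fin d → ℝ))) ≤ 0 := by
  have hy1 : ContDiff ℝ 1 y := hy.of_le (by norm_num)
  set a := fun p => fderiv ℝ y p (1, 0) with ha
  set w := fun p => fderiv ℝ y p (0, e) with hw
  have a1 : ContDiff ℝ 1 a := aux_C1 hy _
  have w1 : ContDiff ℝ 1 w := aux_C1 hy _
  have ad : Differentiable ℝ a := a1.differentiable (by norm_num)
  have wd : Differentiable ℝ w := w1.differentiable (by norm_num)
  have a0 : ∀ t x, x ∉ K → a (t, x) = 0 := fun t x hx => aux_supp hK hs _ t x hx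
  have w0 : ∀ t x, x ∉ K → w (t, x) = 0 := fun t x hx => aux_supp hK hs _ t x hx
  have ac := a1.continuous
  have wc := w1.continuous
  have ac' := aux_C0 a1 (0, e)
  have wc' := aux_C0 w1 (0, e)
  have wc'' := aux_C0 w1 (1, 0)
  have hIBP : ∀ t, ∫ x, a (t, x) * fderiv ℝ w (t, x) (0, e)
      = ∫ x, - (fderiv ℝ w (t, x) (1, 0) * w (t, x)) := by
    intro t
    have := integral_mul_fderiv_eq_neg_fderiv_mul_of_integrable
      (μ := (volume : Measure (Fin d → ℝ))) (f := fun x => a (t, x)) (g := fun x => w (t, x))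
      (v := e) ?_ ?_ ?_ ?_ ?_
    · simp only [aux_slice ad, aux_slice wd] at this
      rw [this, ← integral_neg]
      congr 1; ext x
      rw [ha, aux_symm hy]
    · simp only [aux_slice ad]
      exact aux_int_slice (f := fun p => fderiv ℝ a p (0, e) * w p) (ac'.mul wc) hK
        (fun t x hx => by simp [w0 t x hx]) t
    · simp only [aux_slice wd]
      exact aux_int_slice (f := fun p => a p * fderiv ℝ w p (0, e)) (ac.mul wc') hK
        (fun t x hx => by simp [a0 t x hx]) t
    · exact aux_int_slice (f := fun p => a p * w p) (ac.mul wc) hK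
        (fun t x hx => by simp [a0 t x hx]) t
    · intro x _; fun_prop
    · intro x _; fun_prop
  change ∫ p, a p * fderiv ℝ w p (0, e) ∂_ ≤ 0
  rw [integral_prod _ (aux_int (f := fun p => a p * fderiv ℝ w p (0, e)) (ac.mul wc') hK (fun t x hx => by simp [a0 t x hx]) T)]
  simp only [hIBP]
  have hI : Integrable (fun p => -(fderiv ℝ w p (1, 0) * w p))
      ((volume.restrict (Set.Ioc (0:ℝ) T)).prod (volume : Measure (Fin d → ℝ))) :=
    aux_int (wc''.mul wc).neg hK (fun t x hx => by simp [w0 t x hx]) T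
  rw [← integral_prod _ hI, integral_prod_symm _ hI]
  apply integral_nonpos
  intro x
  have hw0 : w (0, x) = 0 := by
    have := aux_slice (hy1.differentiable (by norm_num)) 0 x e
    simp only [hw]
    rw [← this]
    simp [hinit]
  have hF : ∀ t ∈ Set.uIcc 0 T, HasDerivAt (fun t => -(w (t, x) ^ 2 / 2))
      (-(fderiv ℝ w (t, x) (1, 0) * w (t, x))) t := by
    intro t _
    have := (((aux_time wd t x).pow 2).div_const 2).neg
    have h2 : -(fderiv ℝ w (t, x) (1, 0) * w (t, x))
        = -(((2 : ℕ) : ℝ) * w (t, x) ^ (2 - 1) * (fderiv ℝ w (t, x)) (1, 0) / 2) := by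
      norm_num; ring
    rw [h2]
    exact this
  have := intervalIntegral.integral_eq_sub_of_hasDerivAt hF
    (Continuous.intervalIntegrable (by fun_prop) _ _)
  rw [intervalIntegral.integral_of_le hT.le] at this
  simp only [Pi.zero_apply]
  rw [this, hw0]
  nlinarith [sq_nonneg (w (T, x))]

end helpers

theorem stmt1 {d : ℕ} (T κ : ℝ) (hT : 0 < T) (hκ : 0 < κ)
    (y : ℝ × (Fin d → ℝ) → ℝ) (hy : ContDiff ℝ 2 y)
    (K : Set (Fin d → ℝ)) (hK : IsCompact K)
    (hsupp : ∀ t x, x ∉ K → y (t, x) = 0)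
    (hinit : ∀ x, y (0, x) = 0) :
    (1/2) * (∫ t in Set.Ioc (0:ℝ) T, ∫ x : Fin d → ℝ,
        (timeDeriv y t x - κ * spatialLaplacian y t x) ^ 2) ≤
      (∫ t in Set.Ioc (0:ℝ) T, ∫ x : Fin d → ℝ,
        ((timeDeriv y t x) ^ 2 + κ ^ 2 * (spatialLaplacian y t x) ^ 2)) ∧
    (∫ t in Set.Ioc (0:ℝ) T, ∫ x : Fin d → ℝ,
        ((timeDeriv y t x) ^ 2 + κ ^ 2 * (spatialLaplacian y t x) ^ 2)) ≤
      ∫ t in Set.Ioc (0:ℝ) T, ∫ x : Fin d → ℝ,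
        (timeDeriv y t x - κ * spatialLaplacian y t x) ^ 2 := by
  have hy1 : ContDiff ℝ 1 y := hy.of_le (by norm_num)
  have yd : Differentiable ℝ y := hy1.differentiable (by norm_num)
  set a : ℝ × (Fin d → ℝ) → ℝ := fun p => fderiv ℝ y p (1, 0) with ha
  set c : Fin d → ℝ × (Fin d → ℝ) → ℝ := fun i p =>
    fderiv ℝ (fun q => fderiv ℝ y q (0, Pi.single i 1)) p (0, Pi.single i 1) with hc
  set b : ℝ × (Fin d → ℝ) → ℝ := fun p => ∑ i, c i p with hb
  have hta : ∀ t x, timeDeriv y t x = a (t, x) := fun t x => (aux_time yd t x).deriv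
  have hLb : ∀ t x, spatialLaplacian y t x = b (t, x) := by
    intro t x
    simp only [spatialLaplacian, hb, hc]
    refine Finset.sum_congr rfl fun i _ => ?_
    simp only [aux_space yd]
    exact aux_space ((aux_C1 hy _).differentiable (by norm_num)) i t x
  simp only [hta, hLb]
  have ac : Continuous a := aux_C0 hy1 _
  have cc : ∀ i, Continuous (c i) := fun i => aux_C0 (aux_C1 hy _) _
  have bc : Continuous b := continuous_finsetSum _ fun i _ => cc i
  have a0 : ∀ t x, x ∉ K → a (t, x) = 0 := fun t x hx => aux_supp hK hsupp _ t x hx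
  have c0 : ∀ i t x, x ∉ K → c i (t, x) = 0 := fun i t x hx =>
    aux_supp hK (fun t x hx => aux_supp hK hsupp _ t x hx) _ t x hx
  have b0 : ∀ t x, x ∉ K → b (t, x) = 0 := fun t x hx => by simp [hb, c0 _ t x hx]
  have i1 := aux_int (f := fun p => (a p - κ * b p) ^ 2) (by fun_prop) hK
    (fun t x hx => by simp [a0 t x hx, b0 t x hx]) T
  have i2 := aux_int (f := fun p => a p ^ 2 + κ ^ 2 * b p ^ 2) (by fun_prop) hK
    (fun t x hx => by simp [a0 t x hx, b0 t x hx]) T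
  have i3 := aux_int (f := fun p => a p * b p) (by fun_prop) hK
    (fun t x hx => by simp [a0 t x hx]) T
  rw [← integral_prod _ i1, ← integral_prod _ i2]
  have hab : ∫ p, a p * b p
      ∂((volume.restrict (Set.Ioc (0:ℝ) T)).prod (volume : Measure (Fin d → ℝ))) ≤ 0 := by
    simp only [hb, Finset.mul_sum]
    rw [integral_finsetSum _ fun i _ => aux_int (f := fun p => a p * c i p) (ac.mul (cc i)) hK
      (fun t x hx => by simp [a0 t x hx]) T]
    exact Finset.sum_nonpos fun i _ => aux_cross hT hy hK hsupp hinit _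
  constructor
  · rw [← integral_const_mul]
    refine integral_mono (i1.const_mul _) i2 fun p => ?_
    simp only
    nlinarith [sq_nonneg (a p + κ * b p)]
  · have heq : ∀ p, (a p - κ * b p) ^ 2 = (a p ^ 2 + κ ^ 2 * b p ^ 2) - 2 * κ * (a p * b p) := by
      intro p; ring
    simp only [heq]
    rw [integral_sub i2 (i3.const_mul _), integral_const_mul]
    nlinarith [mul_nonneg hκ.le (neg_nonneg.2 hab)]
end

section
/- Let α > 0, let M be a real symmetric positive definite m × m matrix, M_q a real symmetric positive semidefinite n × n matrix, and L a real m × n matrix such that S := M_q + α L^T M^{-1} L is positive definite. Then the (n + 2m) × (n + 2m) block matrix A = [[M_q, 0, L^T], [0, αM, M], [L, M, 0]] is invertible. -/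
open Matrix

theorem stmt9 {n m : ℕ} (α : ℝ) (hα : 0 < α)
    (M : Matrix (Fin m) (Fin m) ℝ) (hM : M.PosDef)
    (Mq : Matrix (Fin n) (Fin n) ℝ) (hMq : Mq.PosSemidef)
    (L : Matrix (Fin m) (Fin n) ℝ)
    (hS : (Mq + α • (Lᵀ * M⁻¹ * L)).PosDef) :
    IsUnit (Matrix.fromBlocks Mq (Matrix.fromCols 0 Lᵀ)
      (Matrix.fromRows 0 L) (Matrix.fromBlocks (α • M) M M 0)).det := by
  have hu : IsUnit M.det := isUnit_iff_ne_zero.mpr hM.det_pos.ne'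
  have h1 : M * M⁻¹ = 1 := Matrix.mul_nonsing_inv M hu
  have h2 : M⁻¹ * M = 1 := Matrix.nonsing_inv_mul M hu
  have hDE : Matrix.fromBlocks (α • M) M M 0 *
      Matrix.fromBlocks 0 M⁻¹ M⁻¹ (-(α • M⁻¹)) = 1 := by
    rw [Matrix.fromBlocks_multiply, ← Matrix.fromBlocks_one]
    simp [h1]
  have hED := mul_eq_one_comm.mp hDE
  let : Invertible (Matrix.fromBlocks (α • M) M M 0) := ⟨_, hED, hDE⟩
  rw [Matrix.det_fromBlocks₂₂]
  refine IsUnit.mul (Matrix.isUnit_det_of_invertible _) ?_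
  have hE : ⅟(Matrix.fromBlocks (α • M) M M 0) =
      Matrix.fromBlocks 0 M⁻¹ M⁻¹ (-(α • M⁻¹)) := rfl
  rw [hE, Matrix.fromCols_mul_fromBlocks, Matrix.fromCols_mul_fromRows]
  have h := isUnit_iff_ne_zero.mpr hS.det_pos.ne'
  simpa using h
end

section
/- Let α > 0, let M be a real symmetric positive definite m × m matrix, M_q a real symmetric positive semidefinite n × n matrix, and L a real m × n matrix such that S := M_q + α L^T M^{-1} L is positive definite. Define the block matrices A = [[M_q, L^T], [L, −(1/α)M]] and B = [[S, 0], [0, (1/α)M]], both of size (n + m). Then every real generalized eigenvalue μ of the pencil (A, B), i.e., every μ ∈ ℝ for which there exists v ≠ 0 with A v = μ B v, satisfies (√5 − 1)/2 ≤ |μ| ≤ (√5 + 1)/2. In particular the condition number of B^{-1}A is at most cos(π/5)/sin(π/10) = (3 + √5)/2 ≈ 2.62. -/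
open Matrix

theorem aux_scalar (μ q k : ℝ) (hq : 0 ≤ q) (hk : 0 ≤ k) (hs : 0 < q + k)
    (h : (1 - μ ^ 2) * q + (1 - μ - μ ^ 2) * k = 0) :
    (Real.sqrt 5 - 1) / 2 ≤ |μ| ∧ |μ| ≤ (Real.sqrt 5 + 1) / 2 := by
  have h5 : Real.sqrt 5 ^ 2 = 5 := Real.sq_sqrt (by norm_num)
  have h50 : 2 ≤ Real.sqrt 5 := Real.le_sqrt_of_sq_le (by norm_num)
  have h53 : Real.sqrt 5 ≤ 3 := Real.sqrt_le_iff.mpr (by norm_num)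
  have e : (1 - μ ^ 2) * (q + k) = μ * k := by linarith
  rcases le_or_gt 0 μ with hμ | hμ
  · rw [abs_of_nonneg hμ]
    have h1 : 0 ≤ 1 - μ ^ 2 := by
      by_contra hc
      push Not at hc
      nlinarith [mul_pos_of_neg_of_neg hc (neg_neg_of_pos hs), mul_nonneg hμ hk]
    have h2 : 1 - μ ^ 2 ≤ μ := by
      by_contra hc
      push Not at hc
      nlinarith [mul_pos (sub_pos.mpr hc) hs, mul_nonneg hμ hq]
    constructor
    · nlinarith
    · nlinarith
  · rw [abs_of_neg hμ]
    have h1 : 1 - μ ^ 2 ≤ 0 := by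
      by_contra hc
      push Not at hc
      nlinarith [mul_pos hc hs, mul_nonneg (neg_nonneg.mpr hμ.le) hk]
    have h2 : μ ≤ 1 - μ ^ 2 := by
      by_contra hc
      push Not at hc
      nlinarith [mul_pos (sub_pos.mpr hc) hs, mul_nonneg (neg_nonneg.mpr hμ.le) hq]
    constructor
    · nlinarith
    · nlinarith

theorem aux_trig :
    Real.cos (Real.pi / 5) / Real.sin (Real.pi / 10) = (3 + Real.sqrt 5) / 2 := by
  have h5 : Real.sqrt 5 ^ 2 = 5 := Real.sq_sqrt (by norm_num)
  have h50 : 2 ≤ Real.sqrt 5 := Real.le_sqrt_of_sq_le (by norm_num)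
  have hpos : 0 < Real.sin (Real.pi / 10) :=
    Real.sin_pos_of_pos_of_lt_pi (by positivity) (by linarith [Real.pi_pos])
  have hc := Real.cos_pi_div_five
  have h2 : Real.cos (Real.pi / 5) = 1 - 2 * Real.sin (Real.pi / 10) ^ 2 := by
    have : Real.pi / 5 = 2 * (Real.pi / 10) := by ring
    rw [this, Real.cos_two_mul, Real.cos_sq']
    ring
  have hsin : Real.sin (Real.pi / 10) = (Real.sqrt 5 - 1) / 4 := by
    rw [← sq_eq_sq₀ hpos.le (by linarith)]
    nlinarith
  rw [hsin, hc, div_eq_iff (by linarith)]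
  nlinarith

theorem aux_eig {n m : ℕ} (α : ℝ) (hα : 0 < α)
    (M : Matrix (Fin m) (Fin m) ℝ) (hM : M.PosDef)
    (Mq : Matrix (Fin n) (Fin n) ℝ) (hMq : Mq.PosSemidef)
    (L : Matrix (Fin m) (Fin n) ℝ)
    (hS : (Mq + α • (Lᵀ * M⁻¹ * L)).PosDef) (μ : ℝ)
    (v : (Fin n ⊕ Fin m) → ℝ) (hv : v ≠ 0)
    (h : (Matrix.fromBlocks Mq Lᵀ L (-(1/α) • M)) *ᵥ v =
            μ • ((Matrix.fromBlocks (Mq + α • (Lᵀ * M⁻¹ * L)) 0 0 ((1/α) • M)) *ᵥ v)) :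
    (Real.sqrt 5 - 1) / 2 ≤ |μ| ∧ |μ| ≤ (Real.sqrt 5 + 1) / 2 := by
  obtain ⟨x, y, rfl⟩ : ∃ x y, v = Sum.elim x y :=
    ⟨v ∘ Sum.inl, v ∘ Sum.inr, (Sum.elim_comp_inl_inr v).symm⟩
  rw [fromBlocks_mulVec, fromBlocks_mulVec] at h
  have e1 : Mq *ᵥ x + Lᵀ *ᵥ y = μ • ((Mq + α • (Lᵀ * M⁻¹ * L)) *ᵥ x) := by
    ext i
    simpa using congrFun h (Sum.inl i)
  have e2 : α • (L *ᵥ x) = (1 + μ) • (M *ᵥ y) := by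
    ext i
    have := congrFun h (Sum.inr i)
    simp [smul_mulVec, neg_mulVec] at this
    simp only [Pi.smul_apply, smul_eq_mul]
    field_simp at this
    linarith
  have hdet : IsUnit M.det := hM.det_pos.ne'.isUnit
  have e3 : (α • (Lᵀ * M⁻¹ * L)) *ᵥ x = (1 + μ) • (Lᵀ *ᵥ y) := by
    rw [smul_mulVec, ← mulVec_mulVec, ← mulVec_smul, e2, mulVec_smul, mulVec_mulVec,
      Matrix.mul_assoc, Matrix.nonsing_inv_mul _ hdet, Matrix.mul_one]
  by_cases hx : x = 0
  · subst hx
    have hy : y ≠ 0 := by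
      rintro rfl
      apply hv
      ext i
      cases i <;> rfl
    have hp := hM.dotProduct_mulVec_pos hy
    have e4 := congrArg (fun w => star y ⬝ᵥ w) e2
    simp only [mulVec_zero, smul_zero, dotProduct_zero, dotProduct_smul, smul_eq_mul] at e4
    have hμ : μ = -1 := by
      rcases mul_eq_zero.mp e4.symm with h | h
      · linarith
      · exact absurd h hp.ne'
    subst hμ
    exact aux_scalar (-1) 1 0 (by norm_num) (by norm_num) (by norm_num) (by norm_num)
  · have hs := hS.dotProduct_mulVec_pos hx
    have hq := hMq.dotProduct_mulVec_nonneg x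
    have hk : 0 ≤ star x ⬝ᵥ ((α • (Lᵀ * M⁻¹ * L)) *ᵥ x) := by
      have := (hM.inv.posSemidef.conjTranspose_mul_mul_same L).dotProduct_mulVec_nonneg x
      rw [conjTranspose_eq_transpose_of_trivial] at this
      rw [smul_mulVec, dotProduct_smul]
      exact mul_nonneg hα.le this
    have e4 := congrArg (fun w => star x ⬝ᵥ w) e1
    have e5 := congrArg (fun w => star x ⬝ᵥ w) e3
    simp only [add_mulVec, dotProduct_add, dotProduct_smul, smul_eq_mul] at e4 e5 hs
    refine aux_scalar μ _ _ hq hk hs ?_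
    linear_combination (1 + μ) * e4 + e5

theorem stmt11 {n m : ℕ} (α : ℝ) (hα : 0 < α)
    (M : Matrix (Fin m) (Fin m) ℝ) (hM : M.PosDef)
    (Mq : Matrix (Fin n) (Fin n) ℝ) (hMq : Mq.PosSemidef)
    (L : Matrix (Fin m) (Fin n) ℝ)
    (hS : (Mq + α • (Lᵀ * M⁻¹ * L)).PosDef) :
    (∀ μ : ℝ,
      (∃ v : (Fin n ⊕ Fin m) → ℝ, v ≠ 0 ∧
          (Matrix.fromBlocks Mq Lᵀ L (-(1/α) • M)) *ᵥ v =
            μ • ((Matrix.fromBlocks (Mq + α • (Lᵀ * M⁻¹ * L)) 0 0 ((1/α) • M)) *ᵥ v)) →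
        (Real.sqrt 5 - 1) / 2 ≤ |μ| ∧ |μ| ≤ (Real.sqrt 5 + 1) / 2) ∧
    (∀ μ₁ μ₂ : ℝ,
      (∃ v : (Fin n ⊕ Fin m) → ℝ, v ≠ 0 ∧
          (Matrix.fromBlocks Mq Lᵀ L (-(1/α) • M)) *ᵥ v =
            μ₁ • ((Matrix.fromBlocks (Mq + α • (Lᵀ * M⁻¹ * L)) 0 0 ((1/α) • M)) *ᵥ v)) →
      (∃ v : (Fin n ⊕ Fin m) → ℝ, v ≠ 0 ∧
          (Matrix.fromBlocks Mq Lᵀ L (-(1/α) • M)) *ᵥ v =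
            μ₂ • ((Matrix.fromBlocks (Mq + α • (Lᵀ * M⁻¹ * L)) 0 0 ((1/α) • M)) *ᵥ v)) →
        |μ₁| ≤ (Real.cos (Real.pi / 5) / Real.sin (Real.pi / 10)) * |μ₂|) ∧
    Real.cos (Real.pi / 5) / Real.sin (Real.pi / 10) = (3 + Real.sqrt 5) / 2 := by
  have key : ∀ μ : ℝ,
      (∃ v : (Fin n ⊕ Fin m) → ℝ, v ≠ 0 ∧
          (Matrix.fromBlocks Mq Lᵀ L (-(1/α) • M)) *ᵥ v =
            μ • ((Matrix.fromBlocks (Mq + α • (Lᵀ * M⁻¹ * L)) 0 0 ((1/α) • M)) *ᵥ v)) →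
        (Real.sqrt 5 - 1) / 2 ≤ |μ| ∧ |μ| ≤ (Real.sqrt 5 + 1) / 2 := by
    rintro μ ⟨v, hv, h⟩
    exact aux_eig α hα M hM Mq hMq L hS μ v hv h
  refine ⟨key, ?_, aux_trig⟩
  intro μ₁ μ₂ h1 h2
  rw [aux_trig]
  have h5 : Real.sqrt 5 ^ 2 = 5 := Real.sq_sqrt (by norm_num)
  have a := (key μ₁ h1).2
  have b := (key μ₂ h2).1
  nlinarith [mul_le_mul_of_nonneg_left b (by positivity : 0 ≤ (3 + Real.sqrt 5) / 2)]
end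

section
/- Let α > 0, let M be a real symmetric positive definite m × m matrix, M_q a real symmetric positive semidefinite n × n matrix, and L a real m × n matrix such that S := M_q + α L^T M^{-1} L is positive definite. Define the block matrices A = [[M_q, 0, L^T], [0, αM, M], [L, M, 0]] and B₀ = [[S, 0, 0], [0, αM, 0], [0, 0, (1/α)M]], both of size (n + 2m). Then for any two real generalized eigenvalues μ₁, μ₂ of the pencil (A, B₀), i.e., μᵢ ∈ ℝ with A vᵢ = μᵢ B₀ vᵢ for some vᵢ ≠ 0, one has |μ₁| ≤ (cos(π/7)/sin(π/14)) · |μ₂|. In particular the condition number of B₀^{-1}A is at most cos(π/7)/sin(π/14) ≈ 4.05. -/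
open Matrix

lemma aux_trig_s12 (θ : ℝ) (h : Real.cos (4 * θ) = - Real.cos (3 * θ)) (hc : 0 < Real.cos θ) :
    (2 * Real.cos θ)^3 - (2 * Real.cos θ)^2 - 2 * (2 * Real.cos θ) + 1 = 0 := by
  have h4 : Real.cos (4 * θ) = 2 * (2 * Real.cos θ ^ 2 - 1)^2 - 1 := by
    rw [show 4 * θ = 2 * (2 * θ) by ring, Real.cos_two_mul, Real.cos_two_mul]
  rw [h4, Real.cos_three_mul] at h
  have : (Real.cos θ + 1) * ((2 * Real.cos θ)^3 - (2 * Real.cos θ)^2 - 2 * (2 * Real.cos θ) + 1) = 0 := by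
    linear_combination h
  rcases mul_eq_zero.1 this with h | h
  · linarith
  · exact h

lemma aux_scalar_s12 (μ r u a t : ℝ) (ha : 0 ≤ a) (ht : 0 ≤ t)
    (hr : 17/10 < r) (hu : 0 < u) (hu' : u < 11/20)
    (hqr : r^3 - r^2 - 2*r + 1 = 0) (hqu : u^3 - u^2 - 2*u + 1 = 0)
    (hpos : 0 < a + (μ^2 - μ - 1)^2 * t)
    (h : (1 - μ) * a = t * ((μ^2 - μ - 1) * (μ^3 - μ^2 - 2*μ + 1))) :
    u ≤ |μ| ∧ |μ| ≤ r := by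
  have key : ∀ A B : ℝ, 0 < A → 0 < B → A * a + t * B = 0 → False := by
    intro A B hA hB hAB
    have h1 : 0 ≤ A * a := by positivity
    have h2 : 0 ≤ t * B := by positivity
    have h3 : A * a = 0 := by linarith
    have h4 : t * B = 0 := by linarith
    have h5 : a = 0 := by simpa [hA.ne'] using h3
    have h6 : t = 0 := by simpa [hB.ne'] using h4
    simp [h5, h6] at hpos
  constructor
  · by_contra! hlt
    obtain ⟨h1, h2⟩ := abs_lt.1 hlt
    have hp : μ^2 - μ - 1 < 0 := by nlinarith
    have hq : 0 < μ^3 - μ^2 - 2*μ + 1 := by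
      have e : μ^3 - μ^2 - 2*μ + 1 = (u - μ) * (2 + (u + μ) - μ^2 - μ*u - u^2) := by
        linear_combination hqu
      rw [e]
      apply mul_pos (by linarith)
      nlinarith
    exact key (1 - μ) (-((μ^2 - μ - 1) * (μ^3 - μ^2 - 2*μ + 1))) (by linarith)
      (by have := mul_neg_of_neg_of_pos hp hq; linarith) (by rw [h]; ring)
  · by_contra! hlt
    rcases lt_abs.1 hlt with h1 | h1
    · have hp : 0 < μ^2 - μ - 1 := by nlinarith
      have hq : 0 < μ^3 - μ^2 - 2*μ + 1 := by
        have e : μ^3 - μ^2 - 2*μ + 1 = (μ - r) * (μ^2 + μ*r + r^2 - μ - r - 2) := by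
          linear_combination hqr
        rw [e]
        apply mul_pos (by linarith)
        nlinarith
      exact key (μ - 1) _ (by linarith) (mul_pos hp hq) (by linarith)
    · have hp : 0 < μ^2 - μ - 1 := by nlinarith
      have hq : μ^3 - μ^2 - 2*μ + 1 < 0 := by
        have : μ * (μ^2 - μ - 2) ≤ -1.7 * (μ^2 - μ - 2) := by
          apply mul_le_mul_of_nonneg_right <;> nlinarith
        nlinarith
      exact key (1 - μ) (-((μ^2 - μ - 1) * (μ^3 - μ^2 - 2*μ + 1))) (by linarith)
        (by have := mul_neg_of_pos_of_neg hp hq; linarith) (by rw [h]; ring)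

lemma aux_matrix {n m : ℕ} (α : ℝ) (hα : 0 < α)
    (M : Matrix (Fin m) (Fin m) ℝ) (hM : M.PosDef)
    (Mq : Matrix (Fin n) (Fin n) ℝ) (hMq : Mq.PosSemidef)
    (L : Matrix (Fin m) (Fin n) ℝ)
    (hS : (Mq + α • (Lᵀ * M⁻¹ * L)).PosDef) (μ : ℝ)
    (h : ∃ v : (Fin n ⊕ (Fin m ⊕ Fin m)) → ℝ, v ≠ 0 ∧
        (Matrix.fromBlocks Mq (Matrix.fromCols 0 Lᵀ)
            (Matrix.fromRows 0 L) (Matrix.fromBlocks (α • M) M M 0)) *ᵥ v =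
          μ • ((Matrix.fromBlocks (Mq + α • (Lᵀ * M⁻¹ * L)) 0 0
            (Matrix.fromBlocks (α • M) 0 0 ((1/α) • M))) *ᵥ v)) :
    μ^2 - μ - 1 = 0 ∨ ∃ a t : ℝ, 0 ≤ a ∧ 0 ≤ t ∧ 0 < a + (μ^2 - μ - 1)^2 * t ∧
      (1 - μ) * a = t * ((μ^2 - μ - 1) * (μ^3 - μ^2 - 2*μ + 1)) := by
  obtain ⟨v, hv, h⟩ := h
  obtain ⟨x, y, z, rfl⟩ : ∃ x y z, v = Sum.elim x (Sum.elim y z) :=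
    ⟨fun i => v (.inl i), fun i => v (.inr (.inl i)), fun i => v (.inr (.inr i)), by
      ext (i | i | i) <;> rfl⟩
  have hdet : IsUnit M.det := hM.det_pos.ne'.isUnit
  have e1 : Mq *ᵥ x + Lᵀ *ᵥ z = μ • ((Mq + α • (Lᵀ * M⁻¹ * L)) *ᵥ x) := by
    ext i
    have := congrFun h (.inl i)
    simpa [Matrix.fromBlocks_mulVec, Matrix.fromCols_mulVec, Matrix.fromRows_mulVec] using this
  have e2 : α • (M *ᵥ y) + M *ᵥ z = μ • (α • (M *ᵥ y)) := by
    ext i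
    have := congrFun h (.inr (.inl i))
    simpa [Matrix.fromBlocks_mulVec, Matrix.fromCols_mulVec, Matrix.fromRows_mulVec, Matrix.smul_mulVec] using this
  have e3 : L *ᵥ x + M *ᵥ y = μ • ((1/α) • (M *ᵥ z)) := by
    ext i
    have := congrFun h (.inr (.inr i))
    simpa [Matrix.fromBlocks_mulVec, Matrix.fromCols_mulVec, Matrix.fromRows_mulVec, Matrix.smul_mulVec] using this
  have inj : ∀ w : Fin m → ℝ, M⁻¹ *ᵥ (M *ᵥ w) = w := by
    intro w
    rw [Matrix.mulVec_mulVec, Matrix.nonsing_inv_mul _ hdet, Matrix.one_mulVec]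
  have hz0 : M *ᵥ z = (α * (μ - 1)) • (M *ᵥ y) := by
    ext i
    have := congrFun e2 i
    simp at this ⊢
    linarith
  have hz : z = (α * (μ - 1)) • y := by
    rw [← inj z, hz0, Matrix.mulVec_smul, inj]
  have hLx : L *ᵥ x = (μ^2 - μ - 1) • (M *ᵥ y) := by
    ext i
    have := congrFun e3 i
    rw [hz0] at this
    simp at this ⊢
    field_simp at this
    linarith
  by_cases hp : μ^2 - μ - 1 = 0
  · exact Or.inl hp
  right
  have hx : x ≠ 0 := by
    rintro rfl
    apply hv
    have hMy : M *ᵥ y = 0 := by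
      rw [Matrix.mulVec_zero] at hLx
      exact (smul_eq_zero.1 hLx.symm).resolve_left hp
    have hy : y = 0 := by rw [← inj y, hMy, Matrix.mulVec_zero]
    subst hy
    rw [smul_zero] at hz
    subst hz
    ext (i | i | i) <;> rfl
  have ha := hMq.dotProduct_mulVec_nonneg x
  have ht := hM.posSemidef.dotProduct_mulVec_nonneg y
  have hs := hS.dotProduct_mulVec_pos hx
  simp only [star_trivial] at ha ht hs
  have hLxw : ∀ w, x ⬝ᵥ (Lᵀ *ᵥ w) = (μ^2 - μ - 1) * (y ⬝ᵥ M *ᵥ w) := by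
    intro w
    have hMT : Mᵀ = M := by simpa [Matrix.IsHermitian] using hM.1
    rw [Matrix.dotProduct_mulVec, Matrix.vecMul_transpose, hLx, smul_dotProduct, smul_eq_mul,
      Matrix.dotProduct_mulVec, ← Matrix.mulVec_transpose, hMT]
  have hSx : x ⬝ᵥ ((Mq + α • (Lᵀ * M⁻¹ * L)) *ᵥ x) =
      x ⬝ᵥ Mq *ᵥ x + (μ^2 - μ - 1)^2 * (α * (y ⬝ᵥ M *ᵥ y)) := by
    rw [Matrix.add_mulVec, Matrix.smul_mulVec, ← Matrix.mulVec_mulVec, ← Matrix.mulVec_mulVec,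
      hLx, Matrix.mulVec_smul, inj, dotProduct_add, dotProduct_smul, hLxw, Matrix.mulVec_smul,
      dotProduct_smul, smul_eq_mul, smul_eq_mul]
    ring
  refine ⟨x ⬝ᵥ Mq *ᵥ x, α * (y ⬝ᵥ M *ᵥ y), ha, by positivity, hSx ▸ hs, ?_⟩
  have e := congrArg (fun w => x ⬝ᵥ w) e1
  simp only [dotProduct_add, dotProduct_smul, hLxw, hSx, hz0, smul_eq_mul] at e
  linear_combination e

theorem stmt12 {n m : ℕ} (α : ℝ) (hα : 0 < α)
    (M : Matrix (Fin m) (Fin m) ℝ) (hM : M.PosDef)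
    (Mq : Matrix (Fin n) (Fin n) ℝ) (hMq : Mq.PosSemidef)
    (L : Matrix (Fin m) (Fin n) ℝ)
    (hS : (Mq + α • (Lᵀ * M⁻¹ * L)).PosDef) :
    ∀ μ₁ μ₂ : ℝ,
      (∃ v : (Fin n ⊕ (Fin m ⊕ Fin m)) → ℝ, v ≠ 0 ∧
        (Matrix.fromBlocks Mq (Matrix.fromCols 0 Lᵀ)
            (Matrix.fromRows 0 L) (Matrix.fromBlocks (α • M) M M 0)) *ᵥ v =
          μ₁ • ((Matrix.fromBlocks (Mq + α • (Lᵀ * M⁻¹ * L)) 0 0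
            (Matrix.fromBlocks (α • M) 0 0 ((1/α) • M))) *ᵥ v)) →
      (∃ v : (Fin n ⊕ (Fin m ⊕ Fin m)) → ℝ, v ≠ 0 ∧
        (Matrix.fromBlocks Mq (Matrix.fromCols 0 Lᵀ)
            (Matrix.fromRows 0 L) (Matrix.fromBlocks (α • M) M M 0)) *ᵥ v =
          μ₂ • ((Matrix.fromBlocks (Mq + α • (Lᵀ * M⁻¹ * L)) 0 0
            (Matrix.fromBlocks (α • M) 0 0 ((1/α) • M))) *ᵥ v)) →
      |μ₁| ≤ (Real.cos (Real.pi / 7) / Real.sin (Real.pi / 14)) * |μ₂| := by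
  intro μ₁ μ₂ h₁ h₂
  have hpi := Real.pi_pos
  have hc : 17/20 < Real.cos (Real.pi / 7) := by
    have h1 : Real.cos (Real.pi / 6) < Real.cos (Real.pi / 7) :=
      Real.cos_lt_cos_of_nonneg_of_le_pi (by positivity) (by linarith) (by linarith)
    rw [Real.cos_pi_div_six] at h1
    have : (17/10 : ℝ) < √3 := Real.lt_sqrt_of_sq_lt (by norm_num)
    linarith
  have hs : 0 < Real.sin (Real.pi / 14) :=
    Real.sin_pos_of_pos_of_lt_pi (by positivity) (by linarith)
  have hsc : Real.sin (Real.pi / 14) = Real.cos (3 * Real.pi / 7) := by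
    rw [← Real.cos_pi_div_two_sub]; congr 1; ring
  have hcs : Real.cos (Real.pi / 7) = 1 - 2 * Real.sin (Real.pi / 14)^2 := by
    rw [show Real.pi / 7 = 2 * (Real.pi / 14) by ring, Real.cos_two_mul, Real.cos_sq']; ring
  have hqr := aux_trig_s12 (Real.pi / 7) (by rw [← Real.cos_pi_sub]; congr 1; ring) (by linarith)
  have hqu := aux_trig_s12 (3 * Real.pi / 7) (by
    rw [← Real.cos_pi_sub, ← Real.cos_two_pi_sub]
    rw [← Real.cos_neg (Real.pi - _)]; congr 1; ring) (by rw [← hsc]; exact hs)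
  rw [← hsc] at hqu
  generalize Real.cos (Real.pi / 7) = c at *
  generalize Real.sin (Real.pi / 14) = s at *
  have hs2 : s < 11/40 := by nlinarith
  have key : ∀ μ : ℝ, (μ^2 - μ - 1 = 0 ∨ ∃ a t : ℝ, 0 ≤ a ∧ 0 ≤ t ∧
      0 < a + (μ^2 - μ - 1)^2 * t ∧
      (1 - μ) * a = t * ((μ^2 - μ - 1) * (μ^3 - μ^2 - 2*μ + 1))) →
      2 * s ≤ |μ| ∧ |μ| ≤ 2 * c := by
    rintro μ (h | ⟨a, t, ha, ht, hpos, h⟩)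
    · constructor
      · rcases abs_cases μ with ⟨h1, h2⟩ | ⟨h1, h2⟩ <;> rw [h1] <;> nlinarith
      · rw [abs_le]; constructor <;> nlinarith
    · exact aux_scalar_s12 μ (2*c) (2*s) a t ha ht (by linarith) (by linarith) (by linarith) hqr hqu hpos h
  have k1 := (key μ₁ (aux_matrix α hα M hM Mq hMq L hS μ₁ h₁)).2
  have k2 := (key μ₂ (aux_matrix α hα M hM Mq hMq L hS μ₂ h₂)).1
  have hcpos : 0 < c / s := div_pos (by linarith) hs
  calc |μ₁| ≤ 2 * c := k1
    _ = c / s * (2 * s) := by field_simp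
    _ ≤ c / s * |μ₂| := mul_le_mul_of_nonneg_left k2 hcpos.le
end

section
/- Let A be a real symmetric n × n matrix and let B₀, B be real symmetric positive definite n × n matrices such that c₁ x^T B₀ x ≤ x^T B x ≤ c₂ x^T B₀ x for all x ∈ ℝ^n, with constants 0 < c₁ ≤ c₂. Suppose every real generalized eigenvalue μ of the pencil (A, B₀) (i.e., A v = μ B₀ v for some v ≠ 0) satisfies m₀ ≤ |μ| ≤ M₀ for constants 0 < m₀ ≤ M₀. Then every real generalized eigenvalue of the pencil (A, B) satisfies m₀/c₂ ≤ |μ| ≤ M₀/c₁; consequently the condition number of B^{-1}A is at most (c₂/c₁)(M₀/m₀). -/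
open Matrix

open scoped MatrixOrder in
lemma aux_diag {n : ℕ} (A B₀ : Matrix (Fin n) (Fin n) ℝ) (hA : A.IsSymm) (hB₀ : B₀.PosDef) :
    ∃ (P : Matrix (Fin n) (Fin n) ℝ) (d : Fin n → ℝ),
      Pᵀ * B₀ * P = 1 ∧ A * P = B₀ * P * diagonal d := by
  obtain ⟨S, hS, hBS⟩ : ∃ S : Matrix (Fin n) (Fin n) ℝ, IsUnit S ∧ B₀ = Sᵀ * S := by
    obtain ⟨S, hS⟩ := (CStarAlgebra.nonneg_iff_eq_star_mul_self.1 hB₀.posSemidef.nonneg)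
    rw [star_eq_conjTranspose, conjTranspose_eq_transpose_of_trivial] at hS
    refine ⟨S, ?_, hS⟩
    have hu := (Matrix.isUnit_iff_isUnit_det _).1 hB₀.isUnit
    rw [hS, det_mul] at hu
    exact (Matrix.isUnit_iff_isUnit_det _).2 (isUnit_of_mul_isUnit_right hu)
  have hSd : IsUnit S.det := (Matrix.isUnit_iff_isUnit_det S).1 hS
  have h1 : S * S⁻¹ = 1 := Matrix.mul_nonsing_inv S hSd
  have h2 : (S⁻¹)ᵀ * Sᵀ = 1 := by rw [← transpose_mul, h1, transpose_one]
  have h3 : Sᵀ * (S⁻¹)ᵀ = 1 := mul_eq_one_comm.1 h2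
  have hC : ((S⁻¹)ᵀ * A * S⁻¹).IsHermitian := by
    unfold Matrix.IsHermitian
    rw [conjTranspose_eq_transpose_of_trivial]
    simp [transpose_mul, hA.eq, Matrix.mul_assoc]
  obtain ⟨U, d, hU, hCU⟩ : ∃ (U : Matrix (Fin n) (Fin n) ℝ) (d : Fin n → ℝ),
      Uᵀ * U = 1 ∧ (S⁻¹)ᵀ * A * S⁻¹ = U * diagonal d * Uᵀ := by
    refine ⟨hC.eigenvectorUnitary, hC.eigenvalues, ?_, ?_⟩
    · exact (Matrix.mem_unitaryGroup_iff' (A := (hC.eigenvectorUnitary : Matrix (Fin n) (Fin n) ℝ))).1 hC.eigenvectorUnitary.2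
    · exact hC.spectral_theorem
  refine ⟨S⁻¹ * U, d, ?_, ?_⟩
  · rw [hBS, transpose_mul]
    calc Uᵀ * (S⁻¹)ᵀ * (Sᵀ * S) * (S⁻¹ * U) = Uᵀ * ((S⁻¹)ᵀ * Sᵀ) * (S * S⁻¹) * U := by
          simp only [Matrix.mul_assoc]
      _ = 1 := by rw [h1, h2]; simpa using hU
  · rw [hBS]
    calc A * (S⁻¹ * U) = (Sᵀ * (S⁻¹)ᵀ) * A * (S⁻¹ * U) := by rw [h3, Matrix.one_mul]
      _ = Sᵀ * ((S⁻¹)ᵀ * A * S⁻¹) * U := by simp only [Matrix.mul_assoc]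
      _ = Sᵀ * (U * diagonal d) * (Uᵀ * U) := by rw [hCU]; simp only [Matrix.mul_assoc]
      _ = Sᵀ * (S * S⁻¹) * U * diagonal d := by rw [hU, h1]; simp [Matrix.mul_assoc]
      _ = _ := by simp only [Matrix.mul_assoc]

lemma aux_key {n : ℕ} (A B₀ : Matrix (Fin n) (Fin n) ℝ) (hA : A.IsSymm) (hB₀ : B₀.PosDef)
    (m₀ M₀ : ℝ)
    (heig : ∀ μ : ℝ, (∃ v : Fin n → ℝ, v ≠ 0 ∧ A *ᵥ v = μ • (B₀ *ᵥ v)) →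
      m₀ ≤ |μ| ∧ |μ| ≤ M₀) (v : Fin n → ℝ) :
    |v ⬝ᵥ (A *ᵥ v)| ≤ M₀ * (v ⬝ᵥ (B₀ *ᵥ v)) ∧
    ∃ z : Fin n → ℝ, B₀ *ᵥ z = A *ᵥ v ∧ m₀ * |v ⬝ᵥ (A *ᵥ v)| ≤ z ⬝ᵥ (B₀ *ᵥ z) := by
  obtain ⟨P, d, hP, hAP⟩ := aux_diag A B₀ hA hB₀
  have hP' : P * (Pᵀ * B₀) = 1 := mul_eq_one_comm.1 hP
  have hd : ∀ i, m₀ ≤ |d i| ∧ |d i| ≤ M₀ := by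
    intro i
    refine heig (d i) ⟨P *ᵥ Pi.single i 1, ?_, ?_⟩
    · intro h
      have : (Pᵀ * B₀ * P) *ᵥ Pi.single i 1 = 0 := by
        rw [← mulVec_mulVec, h, mulVec_zero]
      rw [hP, one_mulVec] at this
      have := congrFun this i
      simp at this
    · have h1 : diagonal d *ᵥ Pi.single i 1 = d i • (Pi.single i 1 : Fin n → ℝ) := by
        ext j
        rw [mulVec_diagonal]
        by_cases h : j = i
        · subst h; simp
        · simp [h]
      rw [mulVec_mulVec, hAP, ← mulVec_mulVec, h1, mulVec_smul, mulVec_mulVec]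
  have key : ∀ s t : Fin n → ℝ, (P *ᵥ s) ⬝ᵥ (B₀ *ᵥ (P *ᵥ t)) = s ⬝ᵥ t := by
    intro s t
    rw [← vecMul_transpose, ← dotProduct_mulVec, mulVec_mulVec, mulVec_mulVec, hP, one_mulVec]
  obtain ⟨t, rfl⟩ : ∃ t, v = P *ᵥ t := ⟨(Pᵀ * B₀) *ᵥ v, by rw [mulVec_mulVec, hP', one_mulVec]⟩
  have hz : A *ᵥ (P *ᵥ t) = B₀ *ᵥ (P *ᵥ (diagonal d *ᵥ t)) := by
    simp only [mulVec_mulVec, hAP, Matrix.mul_assoc]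
  rw [hz, key, key]
  have hab : |t ⬝ᵥ (diagonal d *ᵥ t)| ≤ ∑ i, |d i| * (t i)^2 := by
    refine (Finset.abs_sum_le_sum_abs _ _).trans (Finset.sum_le_sum fun i _ => le_of_eq ?_)
    rw [mulVec_diagonal, show t i * (d i * t i) = d i * (t i)^2 by ring, abs_mul, abs_of_nonneg (sq_nonneg (t i))]
  refine ⟨hab.trans ?_, P *ᵥ (diagonal d *ᵥ t), rfl, ?_⟩
  · rw [dotProduct, Finset.mul_sum]
    refine Finset.sum_le_sum fun i _ => ?_
    nlinarith [(hd i).2, sq_nonneg (t i)]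
  · rw [key]
    by_cases hm : 0 ≤ m₀
    · refine (mul_le_mul_of_nonneg_left hab hm).trans ?_
      rw [dotProduct, Finset.mul_sum]
      refine Finset.sum_le_sum fun i _ => ?_
      rw [mulVec_diagonal]
      have h1 : m₀ * |d i| ≤ d i ^ 2 := by
        rw [← sq_abs]; nlinarith [(hd i).1, abs_nonneg (d i)]
      nlinarith [mul_le_mul_of_nonneg_right h1 (sq_nonneg (t i))]
    · refine (mul_nonpos_of_nonpos_of_nonneg (le_of_not_ge hm) (abs_nonneg _)).trans ?_
      exact Finset.sum_nonneg fun i _ => mul_self_nonneg _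

lemma aux_cs {n : ℕ} (B : Matrix (Fin n) (Fin n) ℝ) (hB : B.PosDef) (z v : Fin n → ℝ) :
    (z ⬝ᵥ (B *ᵥ v))^2 ≤ (z ⬝ᵥ (B *ᵥ z)) * (v ⬝ᵥ (B *ᵥ v)) := by
  have hs : v ⬝ᵥ (B *ᵥ z) = z ⬝ᵥ (B *ᵥ v) := by
    have : Bᵀ = B := by simpa using hB.isHermitian.eq
    rw [dotProduct_mulVec, ← mulVec_transpose, this, dotProduct_comm]
  have h := fun x : Fin n → ℝ => hB.posSemidef.dotProduct_mulVec_nonneg x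
  simp only [star_trivial] at h
  have h' : ∀ r : ℝ, 0 ≤ (v ⬝ᵥ (B *ᵥ v)) * (r * r) + (2 * (z ⬝ᵥ (B *ᵥ v))) * r + z ⬝ᵥ (B *ᵥ z) := by
    intro r
    have := h (r • v + z)
    simp only [mulVec_add, mulVec_smul, dotProduct_add, add_dotProduct, smul_dotProduct, dotProduct_smul, smul_eq_mul, hs] at this
    linarith
  have := discrim_le_zero h'
  unfold discrim at this
  nlinarith

theorem stmt13 {n : ℕ}
    (A B₀ B : Matrix (Fin n) (Fin n) ℝ)
    (hA : A.IsSymm) (hB₀ : B₀.PosDef) (hB : B.PosDef)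
    (c₁ c₂ : ℝ) (hc₁ : 0 < c₁) (hc₁₂ : c₁ ≤ c₂)
    (hlow : ∀ x : Fin n → ℝ, c₁ * (x ⬝ᵥ (B₀ *ᵥ x)) ≤ x ⬝ᵥ (B *ᵥ x))
    (hupp : ∀ x : Fin n → ℝ, x ⬝ᵥ (B *ᵥ x) ≤ c₂ * (x ⬝ᵥ (B₀ *ᵥ x)))
    (m₀ M₀ : ℝ) (hm₀ : 0 < m₀) (hm₀M₀ : m₀ ≤ M₀)
    (heig : ∀ μ : ℝ, (∃ v : Fin n → ℝ, v ≠ 0 ∧ A *ᵥ v = μ • (B₀ *ᵥ v)) →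
      m₀ ≤ |μ| ∧ |μ| ≤ M₀) :
    (∀ μ : ℝ, (∃ v : Fin n → ℝ, v ≠ 0 ∧ A *ᵥ v = μ • (B *ᵥ v)) →
      m₀ / c₂ ≤ |μ| ∧ |μ| ≤ M₀ / c₁) ∧
    (∀ μ₁ μ₂ : ℝ,
      (∃ v : Fin n → ℝ, v ≠ 0 ∧ A *ᵥ v = μ₁ • (B *ᵥ v)) →
      (∃ v : Fin n → ℝ, v ≠ 0 ∧ A *ᵥ v = μ₂ • (B *ᵥ v)) →
      |μ₁| ≤ (c₂ / c₁) * (M₀ / m₀) * |μ₂|) := by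
  have hc₂ : 0 < c₂ := hc₁.trans_le hc₁₂
  have main : ∀ μ : ℝ, (∃ v : Fin n → ℝ, v ≠ 0 ∧ A *ᵥ v = μ • (B *ᵥ v)) →
      m₀ / c₂ ≤ |μ| ∧ |μ| ≤ M₀ / c₁ := by
    rintro μ ⟨v, hv, hAv⟩
    have hb : 0 < v ⬝ᵥ (B *ᵥ v) := by simpa using hB.dotProduct_mulVec_pos hv
    obtain ⟨hup, z, hz, hlo⟩ := aux_key A B₀ hA hB₀ m₀ M₀ heig v
    have hvA : |v ⬝ᵥ (A *ᵥ v)| = |μ| * (v ⬝ᵥ (B *ᵥ v)) := by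
      rw [hAv, dotProduct_smul, smul_eq_mul, abs_mul, abs_of_pos hb]
    rw [hvA] at hup hlo
    have hμ : 0 < |μ| := by
      rw [abs_pos]
      rintro rfl
      have := (heig 0 ⟨v, hv, by rw [hAv]; simp⟩).1
      simp at this
      linarith
    constructor
    · have hq : z ⬝ᵥ (B₀ *ᵥ z) = μ * (z ⬝ᵥ (B *ᵥ v)) := by
        rw [hz, hAv, dotProduct_smul, smul_eq_mul]
      have hcs := aux_cs B hB z v
      have hqpos : 0 < z ⬝ᵥ (B₀ *ᵥ z) := lt_of_lt_of_le (by positivity) hlo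
      have huz := hupp z
      generalize z ⬝ᵥ (B₀ *ᵥ z) = q at *
      generalize z ⬝ᵥ (B *ᵥ z) = p at *
      generalize z ⬝ᵥ (B *ᵥ v) = r at *
      generalize v ⬝ᵥ (B *ᵥ v) = b at *
      have h1 : q * q ≤ q * (|μ| ^ 2 * c₂ * b) := by
        calc q * q = |μ| ^ 2 * r ^ 2 := by rw [sq_abs, hq]; ring
          _ ≤ |μ| ^ 2 * (p * b) := by gcongr
          _ ≤ |μ| ^ 2 * (c₂ * q * b) := by gcongr
          _ = _ := by ring
      have h2 := le_of_mul_le_mul_left h1 hqpos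
      have h3 : (|μ| * b) * m₀ ≤ (|μ| * b) * (|μ| * c₂) := by nlinarith
      rw [div_le_iff₀ hc₂]
      exact le_of_mul_le_mul_left h3 (by positivity)
    · rw [le_div_iff₀ hc₁]
      have hM : 0 < M₀ := hm₀.trans_le hm₀M₀
      have h1 := mul_le_mul_of_nonneg_left (hlow v) hM.le
      have h2 := mul_le_mul_of_nonneg_left hup hc₁.le
      refine le_of_mul_le_mul_right (a := v ⬝ᵥ (B *ᵥ v)) ?_ hb
      nlinarith
  refine ⟨main, fun μ₁ μ₂ h₁ h₂ => ?_⟩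
  have hM : 0 < M₀ := hm₀.trans_le hm₀M₀
  calc |μ₁| ≤ M₀ / c₁ := (main μ₁ h₁).2
    _ = (c₂ / c₁) * (M₀ / m₀) * (m₀ / c₂) := by field_simp
    _ ≤ _ := by gcongr; exact (main μ₂ h₂).1
end
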